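/- Let L > 0, T > 0, S ∈ [0,T]. Let (η, v) be a pair of real-valued functions on [0,T] × [0,L] with continuous partial derivatives ∂_t η, ∂_t v, ∂_x^j η, ∂_x^j v for j ≤ 3, satisfying η_t + v_x + v_{xxx} = 0 and v_t + η_x + η_{xxx} = 0 on [0,T] × [0,L], and let h₀, h₁, h₂, g₀, g₁, g₂ : [0,T] → ℝ be its boundary traces: η(t,0) = h₀(t), η(t,L) = h₁(t), η_x(t,0) = h₂(t), v(t,0) = g₀(t), v(t,L) = g₁(t), v_x(t,L) = g₂(t). Let (θ, u) be a classical solution of the homogeneous linearized KdV–KdV system on [0,T] × [0,L]. Then ∫₀^L [η(S,x)·θ(S,x) + v(S,x)·u(S,x)] dx − ∫₀^L [η(0,x)·θ(0,x) + v(0,x)·u(0,x)] dx = ∫₀^S [θ_x(t,L)·g₂(t) − θ_{xx}(t,L)·g₁(t) + θ_{xx}(t,0)·g₀(t) − u_x(t,0)·h₂(t) − u_{xx}(t,L)·h₁(t) + u_{xx}(t,0)·h₀(t)] dt. -/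

import Mathlib

/-!
The system is skew-adjoint up to boundary terms, so for two solutions `(η, v)`, `(θ, u)` the density
`η θ + v u` satisfies a conservation law `∂ₜ(η θ + v u) + ∂ₓ J = 0`, where `J` is bilinear in the
spatial derivatives of order at most two. Integrating over `[0, S] × [0, L]` expresses the change
of `∫ (η θ + v u)` through the values of `J` at `x = 0` and `x = L`, and the homogeneous conditions
on `(θ, u)` kill every term of `J` there except those containing one of the six traces `hᵢ`, `gᵢ`.
-/

open Set MeasureTheory

/-- Partial derivative in the first (time) variable. -/
noncomputable def pt (f : ℝ → ℝ → ℝ) : ℝ → ℝ → ℝ := fun t x => deriv (fun s => f s x) t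

/-- Partial derivative in the second (space) variable. -/
noncomputable def px (f : ℝ → ℝ → ℝ) : ℝ → ℝ → ℝ := fun t x => deriv (fun y => f t y) x

/-- `(η, v)` is a regular solution of the linearized KdV–KdV system on `[0,T] × [0,L]`:
the time derivatives and spatial derivatives up to order `3` exist and are continuous on
`[0,T] × [0,L]`, and the equations `η_t + v_x + v_{xxx} = 0`, `v_t + η_x + η_{xxx} = 0` hold.
(No boundary condition is imposed.) -/
def IsRegularSolution (L T : ℝ) (η v : ℝ → ℝ → ℝ) : Prop :=
  (∀ x, Differentiable ℝ fun t => η t x) ∧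
  (∀ x, Differentiable ℝ fun t => v t x) ∧
  (∀ t, ContDiff ℝ 3 (η t)) ∧
  (∀ t, ContDiff ℝ 3 (v t)) ∧
  ContinuousOn (fun q : ℝ × ℝ => η q.1 q.2) (Icc 0 T ×ˢ Icc 0 L) ∧
  ContinuousOn (fun q : ℝ × ℝ => v q.1 q.2) (Icc 0 T ×ˢ Icc 0 L) ∧
  ContinuousOn (fun q : ℝ × ℝ => pt η q.1 q.2) (Icc 0 T ×ˢ Icc 0 L) ∧
  ContinuousOn (fun q : ℝ × ℝ => pt v q.1 q.2) (Icc 0 T ×ˢ Icc 0 L) ∧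
  ContinuousOn (fun q : ℝ × ℝ => px η q.1 q.2) (Icc 0 T ×ˢ Icc 0 L) ∧
  ContinuousOn (fun q : ℝ × ℝ => px v q.1 q.2) (Icc 0 T ×ˢ Icc 0 L) ∧
  ContinuousOn (fun q : ℝ × ℝ => px (px η) q.1 q.2) (Icc 0 T ×ˢ Icc 0 L) ∧
  ContinuousOn (fun q : ℝ × ℝ => px (px v) q.1 q.2) (Icc 0 T ×ˢ Icc 0 L) ∧
  ContinuousOn (fun q : ℝ × ℝ => px (px (px η)) q.1 q.2) (Icc 0 T ×ˢ Icc 0 L) ∧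
  ContinuousOn (fun q : ℝ × ℝ => px (px (px v)) q.1 q.2) (Icc 0 T ×ˢ Icc 0 L) ∧
  (∀ t ∈ Icc (0 : ℝ) T, ∀ x ∈ Icc (0 : ℝ) L,
    pt η t x + px v t x + px (px (px v)) t x = 0) ∧
  (∀ t ∈ Icc (0 : ℝ) T, ∀ x ∈ Icc (0 : ℝ) L,
    pt v t x + px η t x + px (px (px η)) t x = 0)

/-- `(θ, u)` is a classical solution of the homogeneous linearized KdV–KdV system on
`[0,T] × [0,L]`: a regular solution with the homogeneous boundary conditions
`θ(t,0) = θ(t,L) = θ_x(t,0) = 0`, `u(t,0) = u(t,L) = u_x(t,L) = 0`. -/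
def IsClassicalSolution (L T : ℝ) (θ u : ℝ → ℝ → ℝ) : Prop :=
  IsRegularSolution L T θ u ∧
  (∀ t ∈ Icc (0 : ℝ) T, θ t 0 = 0 ∧ θ t L = 0 ∧ px θ t 0 = 0) ∧
  (∀ t ∈ Icc (0 : ℝ) T, u t 0 = 0 ∧ u t L = 0 ∧ px u t L = 0)

section ConservationLaw

variable {E : Type*} [NormedAddCommGroup E] [NormedSpace ℝ E] [CompleteSpace E]

theorem intervalIntegral_sub_eq_integral_flux {ρ J F : ℝ → ℝ → E} {a b c d : ℝ}
    (hρ : ∀ t ∈ uIcc a b, ∀ x ∈ uIcc c d, HasDerivAt (fun s => ρ s x) (F t x) t)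
    (hJ : ∀ t ∈ uIcc a b, ∀ x ∈ uIcc c d, HasDerivAt (J t) (-F t x) x)
    (hF : ContinuousOn F.uncurry (uIcc a b ×ˢ uIcc c d)) :
    ∫ x in c..d, (ρ b x - ρ a x) = ∫ t in a..b, (J t c - J t d) := by
  have hF_time : ∀ x ∈ uIcc c d, IntervalIntegrable (fun t => F t x) volume a b := fun x hx =>
    (hF.uncurry_right x hx).intervalIntegrable
  have hF_space : ∀ t ∈ uIcc a b, IntervalIntegrable (F t) volume c d := fun t ht =>
    (hF.uncurry_left t ht).intervalIntegrable
  have hF_rect : IntegrableOn F.uncurry (uIoc a b ×ˢ uIoc c d) :=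
    (hF.integrableOn_compact (isCompact_uIcc.prod isCompact_uIcc)).mono_set
      (prod_mono uIoc_subset_uIcc uIoc_subset_uIcc)
  calc
    ∫ x in c..d, (ρ b x - ρ a x) = ∫ x in c..d, ∫ t in a..b, F t x :=
      intervalIntegral.integral_congr fun x hx =>
        (intervalIntegral.integral_eq_sub_of_hasDerivAt
          (fun t ht => hρ t ht x hx) (hF_time x hx)).symm
    _ = ∫ t in a..b, ∫ x in c..d, F t x := (intervalIntegral_intervalIntegral_swap hF_rect).symm
    _ = ∫ t in a..b, (J t c - J t d) :=
      intervalIntegral.integral_congr fun t ht => by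
        have hFTC := intervalIntegral.integral_eq_sub_of_hasDerivAt (hJ t ht) (hF_space t ht).neg
        rw [intervalIntegral.integral_neg] at hFTC
        rw [← neg_sub (J t d), ← hFTC, neg_neg]

end ConservationLaw

section Concomitant

variable {𝕜 𝔸 : Type*} [NontriviallyNormedField 𝕜] [NormedRing 𝔸] [NormedAlgebra 𝕜 𝔸]

/-- The bilinear concomitant `f'' g - f' g' + f g''` of the operator `d³/dx³`: the boundary term
in the Lagrange identity that moves three derivatives from `f` to `g`. -/
noncomputable def thirdDerivConcomitant (f g : 𝕜 → 𝔸) (x : 𝕜) : 𝔸 :=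
  deriv (deriv f) x * g x - deriv f x * deriv g x + f x * deriv (deriv g) x

theorem hasDerivAt_thirdDerivConcomitant {f g : 𝕜 → 𝔸} (hf : ContDiff 𝕜 3 f)
    (hg : ContDiff 𝕜 3 g) (x : 𝕜) :
    HasDerivAt (thirdDerivConcomitant f g)
      (deriv (deriv (deriv f)) x * g x + f x * deriv (deriv (deriv g)) x) x := by
  have hf' : ContDiff 𝕜 2 (deriv f) := hf.deriv'
  have hg' : ContDiff 𝕜 2 (deriv g) := hg.deriv'
  have hf₀ := (hf.differentiable (by norm_num) x).hasDerivAt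
  have hg₀ := (hg.differentiable (by norm_num) x).hasDerivAt
  have hf₁ := (hf'.differentiable (by norm_num) x).hasDerivAt
  have hg₁ := (hg'.differentiable (by norm_num) x).hasDerivAt
  have hf₂ := (hf'.differentiable_deriv_two x).hasDerivAt
  have hg₂ := (hg'.differentiable_deriv_two x).hasDerivAt
  refine (((hf₂.mul hg₀).sub (hf₁.mul hg₁)).add (hf₀.mul hg₂)).congr_deriv ?_
  abel

end Concomitant

/-- The density `η θ + v u` of the `L²` duality pairing of the pairs `(η, v)` and `(θ, u)`. -/
def pairingDensity (η v θ u : ℝ → ℝ → ℝ) (t x : ℝ) : ℝ :=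
  η t x * θ t x + v t x * u t x

/-- The flux `J` in the conservation law `∂ₜ(η θ + v u) + ∂ₓ J = 0` for two solutions `(η, v)` and
`(θ, u)` of the KdV–KdV system. The first two terms come from `∂ₓ`, the concomitants from `∂ₓ³`;
since the system is cross-coupled, `v` is paired with `θ` and `η` with `u`. -/
noncomputable def pairingFlux (η v θ u : ℝ → ℝ → ℝ) (t x : ℝ) : ℝ :=
  v t x * θ t x + η t x * u t x +
    thirdDerivConcomitant (v t) (θ t) x + thirdDerivConcomitant (η t) (u t) x

namespace IsRegularSolution

variable {L T : ℝ} {η v θ u : ℝ → ℝ → ℝ}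

theorem continuous_pairingDensity (hηv : IsRegularSolution L T η v)
    (hθu : IsRegularSolution L T θ u) (t : ℝ) : Continuous (pairingDensity η v θ u t) := by
  obtain ⟨-, -, hη, hv, -⟩ := hηv
  obtain ⟨-, -, hθ, hu, -⟩ := hθu
  exact ((hη t).continuous.mul (hθ t).continuous).add ((hv t).continuous.mul (hu t).continuous)

theorem hasDerivAt_pairingDensity (hηv : IsRegularSolution L T η v)
    (hθu : IsRegularSolution L T θ u) (t x : ℝ) :
    HasDerivAt (fun s => pairingDensity η v θ u s x)
      (pt η t x * θ t x + η t x * pt θ t x + (pt v t x * u t x + v t x * pt u t x)) t := by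
  obtain ⟨hη, hv, -⟩ := hηv
  obtain ⟨hθ, hu, -⟩ := hθu
  exact ((hη x t).hasDerivAt.mul (hθ x t).hasDerivAt).add
    ((hv x t).hasDerivAt.mul (hu x t).hasDerivAt)

theorem pt_pairingDensity (hηv : IsRegularSolution L T η v) (hθu : IsRegularSolution L T θ u)
    (t x : ℝ) :
    pt (pairingDensity η v θ u) t x =
      pt η t x * θ t x + η t x * pt θ t x + (pt v t x * u t x + v t x * pt u t x) :=
  (hηv.hasDerivAt_pairingDensity hθu t x).deriv

theorem continuousOn_pt_pairingDensity (hηv : IsRegularSolution L T η v)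
    (hθu : IsRegularSolution L T θ u) :
    ContinuousOn (pt (pairingDensity η v θ u)).uncurry (Icc 0 T ×ˢ Icc 0 L) := by
  have h_eq : (pt (pairingDensity η v θ u)).uncurry = fun q =>
      pt η q.1 q.2 * θ q.1 q.2 + η q.1 q.2 * pt θ q.1 q.2 +
        (pt v q.1 q.2 * u q.1 q.2 + v q.1 q.2 * pt u q.1 q.2) :=
    funext fun q => hηv.pt_pairingDensity hθu q.1 q.2
  obtain ⟨-, -, -, -, hη, hv, hη_t, hv_t, -⟩ := hηv
  obtain ⟨-, -, -, -, hθ, hu, hθ_t, hu_t, -⟩ := hθu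
  rw [h_eq]
  exact ((hη_t.mul hθ).add (hη.mul hθ_t)).add ((hv_t.mul hu).add (hv.mul hu_t))

theorem hasDerivAt_pairingFlux (hηv : IsRegularSolution L T η v)
    (hθu : IsRegularSolution L T θ u) {t x : ℝ} (ht : t ∈ Icc 0 T) (hx : x ∈ Icc 0 L) :
    HasDerivAt (pairingFlux η v θ u t) (-pt (pairingDensity η v θ u) t x) x := by
  rw [hηv.pt_pairingDensity hθu]
  obtain ⟨-, -, hη, hv, -, -, -, -, -, -, -, -, -, -, hη_eq, hv_eq⟩ := hηv
  obtain ⟨-, -, hθ, hu, -, -, -, -, -, -, -, -, -, -, hθ_eq, hu_eq⟩ := hθu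
  have h_space_deriv {f : ℝ → ℝ → ℝ} (hf : ContDiff ℝ 3 (f t)) :
      HasDerivAt (f t) (px f t x) x :=
    (hf.differentiable (by norm_num) x).hasDerivAt
  have h_flux := ((((h_space_deriv (hv t)).mul (h_space_deriv (hθ t))).add
    ((h_space_deriv (hη t)).mul (h_space_deriv (hu t)))).add
    (hasDerivAt_thirdDerivConcomitant (hv t) (hθ t) x)).add
    (hasDerivAt_thirdDerivConcomitant (hη t) (hu t) x)
  refine h_flux.congr_deriv ?_
  change px v t x * θ t x + v t x * px θ t x + (px η t x * u t x + η t x * px u t x) +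
    (px (px (px v)) t x * θ t x + v t x * px (px (px θ)) t x) +
    (px (px (px η)) t x * u t x + η t x * px (px (px u)) t x) = _
  linear_combination θ t x * hη_eq t ht x hx + u t x * hv_eq t ht x hx +
    η t x * hθ_eq t ht x hx + v t x * hu_eq t ht x hx

theorem integral_pairingDensity_sub (hηv : IsRegularSolution L T η v)
    (hθu : IsRegularSolution L T θ u) (hL : 0 ≤ L) {a b : ℝ} (ha : a ∈ Icc 0 T)
    (hb : b ∈ Icc 0 T) :
    (∫ x in (0 : ℝ)..L, pairingDensity η v θ u b x) -
        ∫ x in (0 : ℝ)..L, pairingDensity η v θ u a x =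
      ∫ t in a..b, (pairingFlux η v θ u t 0 - pairingFlux η v θ u t L) := by
  have h_time : uIcc a b ⊆ Icc 0 T := uIcc_subset_Icc ha hb
  have h_space : uIcc 0 L ⊆ Icc 0 L := (uIcc_of_le hL).subset
  rw [← intervalIntegral.integral_sub
    ((hηv.continuous_pairingDensity hθu b).intervalIntegrable 0 L)
    ((hηv.continuous_pairingDensity hθu a).intervalIntegrable 0 L)]
  exact intervalIntegral_sub_eq_integral_flux
    (fun t _ x _ => (hηv.hasDerivAt_pairingDensity hθu t x).differentiableAt.hasDerivAt)
    (fun t ht x hx => hηv.hasDerivAt_pairingFlux hθu (h_time ht) (h_space hx))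
    ((hηv.continuousOn_pt_pairingDensity hθu).mono (prod_mono h_time h_space))

end IsRegularSolution

namespace IsClassicalSolution

variable {L T t : ℝ} {θ u : ℝ → ℝ → ℝ}

theorem pairingFlux_left (hθu : IsClassicalSolution L T θ u) (η v : ℝ → ℝ → ℝ)
    (ht : t ∈ Icc 0 T) :
    pairingFlux η v θ u t 0 =
      v t 0 * px (px θ) t 0 - px η t 0 * px u t 0 + η t 0 * px (px u) t 0 := by
  obtain ⟨hθ, -, hθ_x⟩ := hθu.2.1 t ht
  obtain ⟨hu, -, -⟩ := hθu.2.2 t ht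
  change deriv (θ t) 0 = 0 at hθ_x
  simp only [pairingFlux, thirdDerivConcomitant, hθ, hθ_x, hu, px]
  ring

theorem pairingFlux_right (hθu : IsClassicalSolution L T θ u) (η v : ℝ → ℝ → ℝ)
    (ht : t ∈ Icc 0 T) :
    pairingFlux η v θ u t L =
      v t L * px (px θ) t L - px v t L * px θ t L + η t L * px (px u) t L := by
  obtain ⟨-, hθ, -⟩ := hθu.2.1 t ht
  obtain ⟨-, hu, hu_x⟩ := hθu.2.2 t ht
  change deriv (u t) L = 0 at hu_x
  simp only [pairingFlux, thirdDerivConcomitant, hθ, hu, hu_x, px]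
  ring

end IsClassicalSolution

/-- The duality identity between a regular solution `(η, v)` with boundary traces
`h₀, h₁, h₂, g₀, g₁, g₂` and a classical solution `(θ, u)` of the homogeneous system. -/
theorem statement_17 (L T S : ℝ) (hL : 0 < L) (hT : 0 < T) (hS : S ∈ Icc (0 : ℝ) T)
    (η v : ℝ → ℝ → ℝ) (hηv : IsRegularSolution L T η v)
    (h₀ h₁ h₂ g₀ g₁ g₂ : ℝ → ℝ)
    (htr : ∀ t ∈ Icc (0 : ℝ) T,
      η t 0 = h₀ t ∧ η t L = h₁ t ∧ px η t 0 = h₂ t ∧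
      v t 0 = g₀ t ∧ v t L = g₁ t ∧ px v t L = g₂ t)
    (θ u : ℝ → ℝ → ℝ) (hθu : IsClassicalSolution L T θ u) :
    (∫ x in (0:ℝ)..L, (η S x * θ S x + v S x * u S x))
      - (∫ x in (0:ℝ)..L, (η 0 x * θ 0 x + v 0 x * u 0 x))
    = ∫ t in (0:ℝ)..S,
        (px θ t L * g₂ t - px (px θ) t L * g₁ t + px (px θ) t 0 * g₀ t
          - px u t 0 * h₂ t - px (px u) t L * h₁ t + px (px u) t 0 * h₀ t) := by
  have h_bdry : ∀ t ∈ uIcc 0 S, pairingFlux η v θ u t 0 - pairingFlux η v θ u t L =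
      px θ t L * g₂ t - px (px θ) t L * g₁ t + px (px θ) t 0 * g₀ t
        - px u t 0 * h₂ t - px (px u) t L * h₁ t + px (px u) t 0 * h₀ t := by
    intro t ht
    have htT : t ∈ Icc 0 T := uIcc_subset_Icc ⟨le_rfl, hT.le⟩ hS ht
    obtain ⟨hη₀, hηL, hη_x, hv₀, hvL, hv_x⟩ := htr t htT
    rw [hθu.pairingFlux_left η v htT, hθu.pairingFlux_right η v htT,
      hη₀, hηL, hη_x, hv₀, hvL, hv_x]
    ring
  exact (hηv.integral_pairingDensity_sub hθu.1 hL.le ⟨le_rfl, hT.le⟩ hS).trans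
    (intervalIntegral.integral_congr h_bdry)
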